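/- Let u be a flexible sequence over the hyperreals, M a neutrix, and α, β external numbers such that u M-converges to α and u M-converges to β. Then: (1) N(α) ⊆ M; (2) α − β ⊆ M (Minkowski difference); (3) u M-converges to α + M; (4) for every external number γ, u M-converges to γ if and only if γ ⊆ α + M. -/

import Mathlib

/-!
Everything rests on halving: if `ε` exceeds a neutrix `M`, then so does `ε / 2`, because `M` is
closed under doubling. Two limits `α`, `β` of the same sequence are then within `M` of each other
(`NConv.sub_mem`): if `|x - y| ∉ M` for some `x ∈ α`, `y ∈ β`, then `|x - y| / 2 > M`, and a term of
the sequence strictly closer than `|x - y| / 2` to both `x` and `y` contradicts the triangle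
inequality. Conversely, every subset of `α + M` is again a limit (`NConv.of_subset_add`).
Taking `β = α` in the first fact gives `N(α) ⊆ M`; the other claims are instances of the two facts.
-/

open Pointwise

/-- A neutrix: a convex additive subgroup of the hyperreals. -/
def IsNeutrix (N : Set Hyperreal) : Prop :=
  (0 : Hyperreal) ∈ N ∧
  (∀ x ∈ N, ∀ y ∈ N, x + y ∈ N) ∧
  (∀ x ∈ N, -x ∈ N) ∧
  (∀ x ∈ N, ∀ y ∈ N, ∀ z : Hyperreal, x ≤ z → z ≤ y → z ∈ N)

/-- An external number: a set of the form a + A with A a neutrix. -/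
def IsExternal (α : Set Hyperreal) : Prop :=
  ∃ (a : Hyperreal) (A : Set Hyperreal), IsNeutrix A ∧ α = (a + ·) '' A

/-- α ≤ β : every element of α is below some element of β. -/
def SetLE (α β : Set Hyperreal) : Prop := ∀ x ∈ α, ∃ y ∈ β, x ≤ y

/-- α < β : every element of α is below every element of β. -/
def SetLT (α β : Set Hyperreal) : Prop := ∀ x ∈ α, ∀ y ∈ β, x < y

/-- α ≥ β : every element of α is above some element of β. -/
def SetGE (α β : Set Hyperreal) : Prop := ∀ x ∈ α, ∃ y ∈ β, y ≤ x

/-- α > β : every element of α is above every element of β. -/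
def SetGT (α β : Set Hyperreal) : Prop := ∀ x ∈ α, ∀ y ∈ β, y < x

/-- ε > N : ε exceeds every element of the neutrix N. -/
def GtNeutrix (ε : Hyperreal) (N : Set Hyperreal) : Prop := ∀ m ∈ N, m < ε

/-- A flexible sequence: all values are external numbers. -/
def Flexible (u : ℕ → Set Hyperreal) : Prop := ∀ n, IsExternal (u n)

/-- N-convergence of a sequence of subsets of the hyperreals to a set α. -/
def NConv (N : Set Hyperreal) (u : ℕ → Set Hyperreal) (α : Set Hyperreal) : Prop :=
  ∀ ε : Hyperreal, GtNeutrix ε N →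
    ∃ n₀ : ℕ, ∀ n ≥ n₀, ∀ x ∈ u n, ∀ y ∈ α, |x - y| < ε

/-- Strong convergence: the terms are eventually included in the limit set. -/
def StrongConv (u : ℕ → Set Hyperreal) (α : Set Hyperreal) : Prop :=
  ∃ n₀ : ℕ, ∀ n ≥ n₀, u n ⊆ α

/-- N-Cauchy sequences of sets. -/
def NCauchy (N : Set Hyperreal) (w : ℕ → Set Hyperreal) : Prop :=
  ∀ ε : Hyperreal, GtNeutrix ε N →
    ∃ k : ℕ, ∀ m ≥ k, ∀ n ≥ k, ∀ x ∈ w m, ∀ y ∈ w n, |x - y| < ε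

/-- Strongly N-Cauchy sequences of sets. -/
def StrongNCauchy (N : Set Hyperreal) (w : ℕ → Set Hyperreal) : Prop :=
  ∃ k : ℕ, ∀ m ≥ k, ∀ n ≥ k, w n - w m ⊆ N

lemma IsNeutrix.abs_mem {M : Set Hyperreal} (hM : IsNeutrix M) {x : Hyperreal} (hx : x ∈ M) :
    |x| ∈ M := by
  rcases abs_choice x with h | h
  · rwa [h]
  · rw [h]
    exact hM.2.2.1 x hx

lemma IsNeutrix.mem_of_abs_mem {M : Set Hyperreal} (hM : IsNeutrix M) {x : Hyperreal}
    (hx : |x| ∈ M) : x ∈ M :=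
  hM.2.2.2 _ (hM.2.2.1 _ hx) _ hx x (neg_abs_le x) (le_abs_self x)

lemma GtNeutrix.half {M : Set Hyperreal} (hM : IsNeutrix M) {ε : Hyperreal}
    (hε : GtNeutrix ε M) : GtNeutrix (ε / 2) M := by
  intro m hm
  have := hε (m + m) (hM.2.1 m hm m hm)
  linarith

/-- A nonnegative hyperreal outside a neutrix exceeds it, by convexity. -/
lemma IsNeutrix.gt_of_notMem {M : Set Hyperreal} (hM : IsNeutrix M) {d : Hyperreal}
    (hd : 0 ≤ d) (hdM : d ∉ M) : GtNeutrix d M := by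
  intro m hm
  by_contra! h
  exact hdM (hM.2.2.2 0 hM.1 m hm d hd h)

lemma IsExternal.nonempty {α : Set Hyperreal} (hα : IsExternal α) : α.Nonempty := by
  obtain ⟨a, A, hA, rfl⟩ := hα
  exact ⟨a + 0, 0, hA.1, rfl⟩

/-- Uniqueness of limits modulo `M`. Flexibility only serves to make the terms nonempty. -/
lemma NConv.sub_mem {M : Set Hyperreal} (hM : IsNeutrix M) {u : ℕ → Set Hyperreal}
    (hu : Flexible u) {α β : Set Hyperreal} (hα : NConv M u α) (hβ : NConv M u β)
    {x y : Hyperreal} (hx : x ∈ α) (hy : y ∈ β) : x - y ∈ M := by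
  by_contra h
  have hgt : GtNeutrix (|x - y| / 2) M :=
    (hM.gt_of_notMem (abs_nonneg _) fun h' => h (hM.mem_of_abs_mem h')).half hM
  obtain ⟨n₁, h₁⟩ := hα _ hgt
  obtain ⟨n₂, h₂⟩ := hβ _ hgt
  obtain ⟨z, hz⟩ := (hu (max n₁ n₂)).nonempty
  have hzx := h₁ _ (le_max_left _ _) z hz x hx
  have hzy := h₂ _ (le_max_right _ _) z hz y hy
  have htri := abs_sub_le x z y
  rw [abs_sub_comm x z] at htri
  linarith

lemma NConv.of_subset_add {M : Set Hyperreal} (hM : IsNeutrix M) {u : ℕ → Set Hyperreal}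
    {α γ : Set Hyperreal} (hα : NConv M u α) (hγ : γ ⊆ α + M) : NConv M u γ := by
  intro ε hε
  obtain ⟨n₀, h₀⟩ := hα _ (hε.half hM)
  refine ⟨n₀, fun n hn z hz y hy => ?_⟩
  obtain ⟨x, hx, m, hm, rfl⟩ := Set.mem_add.1 (hγ hy)
  have hzx := h₀ n hn z hz x hx
  have hmε := hε.half hM _ (hM.abs_mem hm)
  have htri := abs_sub (z - x) m
  rw [sub_sub] at htri
  linarith

theorem uniqueness_of_limits_mod_M (M : Set Hyperreal) (hM : IsNeutrix M)
    (u : ℕ → Set Hyperreal) (hu : Flexible u)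
    (a : Hyperreal) (A : Set Hyperreal) (hA : IsNeutrix A)
    (α : Set Hyperreal) (hα : α = (a + ·) '' A)
    (β : Set Hyperreal) (hβ : IsExternal β)
    (huα : NConv M u α) (huβ : NConv M u β) :
    A ⊆ M ∧
    α - β ⊆ M ∧
    NConv M u (α + M) ∧
    (∀ γ : Set Hyperreal, IsExternal γ → (NConv M u γ ↔ γ ⊆ α + M)) := by
  have haα : a ∈ α := hα ▸ ⟨0, hA.1, add_zero a⟩
  refine ⟨fun x hx => ?_, ?_, huα.of_subset_add hM subset_rfl,
    fun γ _ => ⟨fun hγ y hy => ?_, huα.of_subset_add hM⟩⟩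
  · have hxα : a + x ∈ α := hα ▸ ⟨x, hx, rfl⟩
    simpa using NConv.sub_mem hM hu huα huα hxα haα
  · rintro _ ⟨x, hx, y, hy, rfl⟩
    exact NConv.sub_mem hM hu huα huβ hx hy
  · exact Set.mem_add.2 ⟨a, haα, y - a, NConv.sub_mem hM hu hγ huα hy haα, by ring⟩
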